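/- Let K ⊆ ℂ be a compact set with connected complement, and let f be holomorphic on an open neighborhood of K. Then for every ε > 0 there exists a polynomial p with sup_{z ∈ K} |f(z) - p(z)| < ε. -/

import Mathlib

open Complex MeasureTheory Set Filter Topology

/-- Twice the Wirtinger derivative `∂/∂z̄` of a function on the complex plane. -/
noncomputable def twiceDbar (g : ℂ → ℂ) (w : ℂ) : ℂ :=
  fderiv ℝ g w 1 + I * fderiv ℝ g w I

lemma continuous_twiceDbar {g : ℂ → ℂ} (hg : ContDiff ℝ 1 g) : Continuous (twiceDbar g) := by
  have h := hg.continuous_fderiv one_ne_zero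
  unfold twiceDbar
  fun_prop

lemma HasCompactSupport.twiceDbar {g : ℂ → ℂ} (hg : HasCompactSupport g) :
    HasCompactSupport (twiceDbar g) := by
  refine (hg.fderiv (𝕜 := ℝ)).mono fun w hw h ↦ hw ?_
  simp [_root_.twiceDbar, h]

lemma twiceDbar_eq_zero {g : ℂ → ℂ} {w : ℂ} (hg : DifferentiableAt ℂ g w) :
    twiceDbar g w = 0 := by
  have h : fderiv ℝ g w I = I * fderiv ℝ g w 1 := by
    rw [hg.fderiv_restrictScalars ℝ]
    simp
  rw [twiceDbar, h, ← mul_assoc, I_mul_I]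
  ring

lemma twiceDbar_comp_add_const (g : ℂ → ℂ) (z w : ℂ) :
    twiceDbar (fun v ↦ g (v + z)) w = twiceDbar g (w + z) := by
  simp [twiceDbar, fderiv_comp_add_right]

lemma hasDerivAt_comp_polar_radius {g : ℂ → ℂ} (hg : Differentiable ℝ g) (r θ : ℝ) :
    HasDerivAt (fun s : ℝ ↦ g (s * exp (θ * I)))
      (fderiv ℝ g (r * exp (θ * I)) (exp (θ * I))) r := by
  have h : HasDerivAt (fun s : ℝ ↦ (s : ℂ) * exp (θ * I)) (exp (θ * I)) r := by
    simpa using (ofRealCLM.hasDerivAt (x := r)).mul_const (exp (θ * I))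
  exact (hg _).hasFDerivAt.comp_hasDerivAt r h

lemma hasDerivAt_comp_polar_angle {g : ℂ → ℂ} (hg : Differentiable ℝ g) (r θ : ℝ) :
    HasDerivAt (fun s : ℝ ↦ g (r * exp (s * I)))
      (r * fderiv ℝ g (r * exp (θ * I)) (I * exp (θ * I))) θ := by
  have h : HasDerivAt (fun s : ℝ ↦ (r : ℂ) * exp (s * I)) (r • (I * exp (θ * I))) θ := by
    simpa [mul_comm] using (((ofRealCLM.hasDerivAt (x := θ)).mul_const I).cexp).const_mul (r : ℂ)
  have := (hg _).hasFDerivAt.comp_hasDerivAt θ h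
  rwa [map_smul, real_smul] at this

lemma twiceDbar_polar (g : ℂ → ℂ) {r : ℝ} (hr : 0 < r) (θ : ℝ) :
    r • ((r * exp (θ * I))⁻¹ * twiceDbar g (r * exp (θ * I))) =
      fderiv ℝ g (r * exp (θ * I)) (exp (θ * I)) +
        I * fderiv ℝ g (r * exp (θ * I)) (I * exp (θ * I)) := by
  have hr' : (r : ℂ) ≠ 0 := mod_cast hr.ne'
  set L := fderiv ℝ g (r * exp (θ * I)) with hL
  have e1 : exp (θ * I) = (Real.cos θ) • (1 : ℂ) + (Real.sin θ) • I := by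
    simp [exp_mul_I]
  have e2 : I * exp (θ * I) = (-Real.sin θ) • (1 : ℂ) + (Real.cos θ) • I := by
    rw [e1]
    simp only [real_smul, mul_one, ofReal_neg]
    linear_combination (Real.sin θ : ℂ) * I_mul_I
  have e3 : (exp (θ * I))⁻¹ = Real.cos θ - Real.sin θ * I := by
    rw [← exp_neg, ← neg_mul, ← ofReal_neg, exp_mul_I, ← ofReal_cos, ← ofReal_sin]
    simp [sub_eq_add_neg]
  rw [e2, mul_inv, twiceDbar, ← hL, e3]
  rw [show L (exp (θ * I)) = _ from congrArg L e1]
  simp only [map_add, map_smul]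
  simp only [real_smul, ofReal_neg]
  field_simp
  linear_combination (-Real.sin θ * L I : ℂ) * I_mul_I

lemma HasCompactSupport.integrableOn_polar {F : ℂ → ℂ →L[ℝ] ℂ} (hF : Continuous F)
    (hc : HasCompactSupport F) {v : ℝ → ℂ} (hv : Continuous v) :
    IntegrableOn (fun p : ℝ × ℝ ↦ F (p.1 * exp (p.2 * I)) (v p.2))
      (Ioi 0 ×ˢ Ioo (-Real.pi) Real.pi) := by
  obtain ⟨R, hR⟩ := hc.isCompact.isBounded.subset_closedBall 0
  have hcont : Continuous fun p : ℝ × ℝ ↦ F (p.1 * exp (p.2 * I)) (v p.2) := by fun_prop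
  have hint : IntegrableOn (fun p : ℝ × ℝ ↦ F (p.1 * exp (p.2 * I)) (v p.2))
      (Icc 0 R ×ˢ Icc (-Real.pi) Real.pi) :=
    hcont.continuousOn.integrableOn_compact (isCompact_Icc.prod isCompact_Icc)
  refine hint.of_forall_sdiff_eq_zero (measurableSet_Ioi.prod measurableSet_Ioo) ?_
  rintro ⟨r, θ⟩ ⟨⟨hr, hθ⟩, h⟩
  simp only [mem_Ioi] at hr
  have hrR : R < r := by
    by_contra! hle
    exact h ⟨⟨hr.le, hle⟩, Ioo_subset_Icc_self hθ⟩
  have : F (r * exp (θ * I)) = 0 := by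
    refine image_eq_zero_of_notMem_tsupport fun hmem ↦ ?_
    have := hR hmem
    simp [norm_exp_ofReal_mul_I, abs_of_pos hr] at this
    linarith
  simp [this]

lemma integral_inv_mul_twiceDbar {g : ℂ → ℂ} (hg : ContDiff ℝ 1 g) (hc : HasCompactSupport g) :
    ∫ w, w⁻¹ * twiceDbar g w = -(2 * Real.pi) * g 0 := by
  have hd : Differentiable ℝ g := hg.differentiable one_ne_zero
  have hcont := hg.continuous_fderiv one_ne_zero
  have hA := (hc.fderiv (𝕜 := ℝ)).integrableOn_polar hcont (v := fun θ ↦ exp (θ * I))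
    (by fun_prop)
  have hB := (hc.fderiv (𝕜 := ℝ)).integrableOn_polar hcont (v := fun θ ↦ I * exp (θ * I))
    (by fun_prop)
  have radial (θ : ℝ) :
      ∫ r in Ioi (0 : ℝ), fderiv ℝ g (r * exp (θ * I)) (exp (θ * I)) = -g 0 := by
    have hsm : ContDiff ℝ 1 fun s : ℝ ↦ g (s * exp (θ * I)) :=
      hg.comp (ofRealCLM.contDiff.mul contDiff_const)
    have hcs : HasCompactSupport fun s : ℝ ↦ g (s * exp (θ * I)) := by
      refine hc.comp_isClosedEmbedding (g := fun s : ℝ ↦ (s : ℂ) * exp (θ * I))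
        (Isometry.isClosedEmbedding <| Isometry.of_dist_eq fun a b ↦ ?_)
      rw [dist_eq_norm, ← sub_mul, norm_mul, norm_exp_ofReal_mul_I, mul_one, ← ofReal_sub,
        norm_real, dist_eq_norm]
    have := hcs.integral_Ioi_deriv_eq hsm 0
    simpa [(hasDerivAt_comp_polar_radius hd _ θ).deriv] using this
  have angular (r : ℝ) (hr : 0 < r) :
      ∫ θ in Ioo (-Real.pi) Real.pi, fderiv ℝ g (r * exp (θ * I)) (I * exp (θ * I)) = 0 := by
    have hr' : (r : ℂ) ≠ 0 := mod_cast hr.ne'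
    have := intervalIntegral.integral_eq_sub_of_hasDerivAt (a := -Real.pi) (b := Real.pi)
      (fun θ _ ↦ hasDerivAt_comp_polar_angle hd r θ)
      (Continuous.intervalIntegrable (by fun_prop) _ _)
    rw [intervalIntegral.integral_const_mul,
      intervalIntegral.integral_of_le (by linarith [Real.pi_pos]), integral_Ioc_eq_integral_Ioo,
      ofReal_neg, neg_mul, exp_neg, exp_pi_mul_I] at this
    norm_num at this
    exact this.resolve_left hr.ne'
  rw [← Complex.integral_comp_polarCoord_symm, polarCoord_target]
  have key : ∀ p ∈ Ioi (0 : ℝ) ×ˢ Ioo (-Real.pi) Real.pi,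
      p.1 • ((Complex.polarCoord.symm p)⁻¹ * twiceDbar g (Complex.polarCoord.symm p)) =
      fderiv ℝ g (p.1 * exp (p.2 * I)) (exp (p.2 * I)) +
        I * fderiv ℝ g (p.1 * exp (p.2 * I)) (I * exp (p.2 * I)) := by
    rintro ⟨r, θ⟩ ⟨hr, -⟩
    have : Complex.polarCoord.symm (r, θ) = r * exp (θ * I) := by
      simp [Complex.polarCoord_symm_apply, exp_mul_I]
    rw [this, twiceDbar_polar g hr]
  rw [setIntegral_congr_fun (measurableSet_Ioi.prod measurableSet_Ioo) key,
    integral_add hA (hB.const_mul I), integral_const_mul]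
  have iA : ∫ p in Ioi (0 : ℝ) ×ˢ Ioo (-Real.pi) Real.pi,
      fderiv ℝ g (p.1 * exp (p.2 * I)) (exp (p.2 * I)) = -(2 * Real.pi) * g 0 := by
    rw [Measure.volume_eq_prod, ← setIntegral_prod_swap, setIntegral_prod]
    · simp only [Prod.fst_swap, Prod.snd_swap, radial]
      simp [Real.pi_pos.le, ← two_mul]
    · exact hA.swap
  have iB : ∫ p in Ioi (0 : ℝ) ×ˢ Ioo (-Real.pi) Real.pi,
      fderiv ℝ g (p.1 * exp (p.2 * I)) (I * exp (p.2 * I)) = 0 := by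
    rw [Measure.volume_eq_prod, setIntegral_prod _ hB]
    exact setIntegral_eq_zero_of_forall_eq_zero fun r hr ↦ angular r hr
  rw [iA, iB]
  simp

/-- The Cauchy–Pompeiu formula for compactly supported functions. -/
lemma integral_inv_sub_mul_twiceDbar {g : ℂ → ℂ} (hg : ContDiff ℝ 1 g)
    (hc : HasCompactSupport g) (z : ℂ) :
    ∫ w, (w - z)⁻¹ * twiceDbar g w = -(2 * Real.pi) * g z := by
  have hc' : HasCompactSupport fun v ↦ g (v + z) := hc.comp_homeomorph (Homeomorph.addRight z)
  have := integral_inv_mul_twiceDbar (g := fun v ↦ g (v + z))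
    (hg.comp (contDiff_id.add contDiff_const)) hc'
  rw [← integral_add_right_eq_self _ z]
  simpa [twiceDbar_comp_add_const] using this

lemma DifferentiableOn.exists_contDiff_hasCompactSupport {f : ℂ → ℂ} {U K : Set ℂ}
    (hf : DifferentiableOn ℂ f U) (hU : IsOpen U) (hK : IsCompact K) (hKU : K ⊆ U) :
    ∃ g : ℂ → ℂ, ContDiff ℝ 1 g ∧ HasCompactSupport g ∧ ∀ᶠ w in 𝓝ˢ K, g w = f w := by
  obtain ⟨L, hL, hKL, hLU⟩ := exists_compact_between hK hU hKU
  obtain ⟨χ, hχ1, hχ0, -⟩ := exists_contMDiffMap_one_nhds_of_subset_interior (n := 1)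
    (modelWithCornersSelf ℝ ℂ) hK.isClosed hKL
  have hχ : ContDiff ℝ 1 χ := χ.contMDiff.contDiff
  refine ⟨fun w ↦ χ w * f w, contDiff_iff_contDiffAt.2 fun w ↦ ?_,
    HasCompactSupport.intro hL fun w hw ↦ by simp [hχ0 w hw], ?_⟩
  · by_cases hw : w ∈ U
    · have : ContDiffAt ℝ 1 f w :=
        ((hf.contDiffOn hU).contDiffAt (hU.mem_nhds hw)).restrict_scalars ℝ
      exact (ofRealCLM.contDiff.comp hχ).contDiffAt.mul this
    · refine (contDiffAt_const (c := (0 : ℂ))).congr_of_eventuallyEq ?_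
      filter_upwards [hL.isClosed.isOpen_compl.mem_nhds fun h ↦ hw (hLU h)] with v hv
      simp [hχ0 v hv]
  · filter_upwards [hχ1] with w hw
    simp [hw]

/-- Runge's polynomial approximation theorem. -/
theorem stmt_14 (K : Set ℂ) (hK : IsCompact K) (hKc : IsConnected Kᶜ)
    (U : Set ℂ) (hU : IsOpen U) (hKU : K ⊆ U)
    (f : ℂ → ℂ) (hf : DifferentiableOn ℂ f U)
    (ε : ℝ) (hε : 0 < ε) :
    ∃ p : Polynomial ℂ, ∀ z ∈ K, ‖f z - p.eval z‖ < ε := by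
  obtain ⟨g, hg, hgc, hgf⟩ := hf.exists_contDiff_hasCompactSupport hU hK hKU
  have : CompactSpace K := isCompact_iff_compactSpace.1 hK
  let S : Subalgebra ℂ C(K, ℂ) := (polynomialFunctions K).topologicalClosure
  have hS : IsClosed (S : Set C(K, ℂ)) := Subalgebra.isClosed_topologicalClosure _
  have : CompleteSpace S := hS.completeSpace_coe
  let x : S := ⟨Polynomial.toContinuousMapOn .X K,
    Subalgebra.le_topologicalClosure _ ⟨.X, by simp⟩⟩
  have hx (z : K) : (x : C(K, ℂ)) z = z := by simp [x]
  have hspec : spectrum ℂ (x : C(K, ℂ)) = K := by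
    rw [ContinuousMap.spectrum_eq_range]
    ext z
    simp [hx]
  have hspec' : spectrum ℂ x = K := by
    rw [Subalgebra.spectrum_eq_of_isPreconnected_compl S x, hspec]
    rw [hspec]
    exact hKc.isPreconnected
  have hres {w : ℂ} (hw : w ∉ K) : w ∈ resolventSet ℂ x := by
    rw [← hspec'] at hw
    exact not_not.1 hw
  have hres_apply {w : ℂ} (hw : w ∉ K) (z : K) :
      ((resolvent x w : S) : C(K, ℂ)) z = (w - z)⁻¹ := by
    have h1 : resolvent x w * (algebraMap ℂ S w - x) = 1 := Ring.inverse_mul_cancel _ (hres hw)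
    have h2 := congrArg (fun s : S ↦ (s : C(K, ℂ)) z) h1
    simp [hx] at h2
    exact eq_inv_of_mul_eq_one_left h2
  have hzero : ∀ᶠ w in 𝓝ˢ K, twiceDbar g w = 0 := by
    refine eventually_nhdsSet_iff_forall.2 fun z hz ↦ ?_
    filter_upwards [(hgf.filter_mono (nhds_le_nhdsSet hz)).eventually_nhds,
      hU.mem_nhds (hKU hz)] with w hw hwU
    exact twiceDbar_eq_zero ((hf.differentiableAt (hU.mem_nhds hwU)).congr_of_eventuallyEq hw)
  let G : ℂ → S := fun w ↦ twiceDbar g w • resolvent x w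
  have hGcont : Continuous G := by
    refine continuous_iff_continuousAt.2 fun w ↦ ?_
    by_cases hw : w ∈ K
    · have : G =ᶠ[𝓝 w] fun _ ↦ 0 := by
        filter_upwards [hzero.filter_mono (nhds_le_nhdsSet hw)] with v hv
        simp [G, hv]
      exact continuousAt_const.congr this.symm
    · exact (continuous_twiceDbar hg).continuousAt.smul
        (spectrum.hasDerivAt_resolvent_const_left (hres hw)).continuousAt
  have hGint : Integrable G := hGcont.integrable_of_hasCompactSupport hgc.twiceDbar.smul_right
  have heval (z : K) : ((∫ w, G w : S) : C(K, ℂ)) z = -(2 * Real.pi) * f z := by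
    let ev : S →L[ℂ] ℂ := (ContinuousMap.evalCLM ℂ z).comp (Subalgebra.toSubmodule S).subtypeL
    have h1 := ev.integral_comp_comm hGint
    have h2 (w : ℂ) : ev (G w) = (w - z)⁻¹ * twiceDbar g w := by
      change twiceDbar g w * ((resolvent x w : S) : C(K, ℂ)) z = _
      by_cases hw : w ∈ K
      · simp [hzero.self_of_nhdsSet w hw]
      · rw [hres_apply hw, mul_comm]
    simp_rw [h2, integral_inv_sub_mul_twiceDbar hg hgc, hgf.self_of_nhdsSet z z.2] at h1
    exact h1.symm
  have hmem : (-(2 * Real.pi) : ℂ)⁻¹ • ((∫ w, G w : S) : C(K, ℂ)) ∈ S :=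
    S.smul_mem (Subtype.prop _) _
  obtain ⟨q, ⟨p, -, rfl⟩, hp⟩ := Metric.mem_closure_iff.1 hmem ε hε
  refine ⟨p, fun z hz ↦ ?_⟩
  have h := (ContinuousMap.dist_apply_le_dist (⟨z, hz⟩ : K)).trans_lt hp
  have hpi : (-(2 * Real.pi) : ℂ) ≠ 0 := by simp [Real.pi_ne_zero]
  rw [ContinuousMap.smul_apply, heval, smul_eq_mul, inv_mul_cancel_left₀ hpi, dist_eq_norm] at h
  simpa using h
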